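/- arXiv:2602.18680 — 8 statements merged into one kernel-verified Lean document; each statement's English description precedes it below -/
import Mathlib

section
/- For all positive integers x, y, z one has x : (y : z) = ((x·z) : y) / (z : y) = gcd(x·y, x·z) / gcd(y, x·z), where all indicated divisions are exact; equivalently, (x : (y : z))·(z : y) = (x·z) : y and (x : (y : z))·gcd(y, x·z) = gcd(x·y, x·z). -/
/-- The colon operation on positive integers: `x : y = x / gcd(x,y)` (exact division). -/
def colon (x y : ℕ) : ℕ := x / Nat.gcd x y

/-! Everything follows from `gcd(x, y : z) · gcd(y, z) = gcd(y, x·z)`, which holds because `x·y`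
can be absorbed into `y` in `gcd(x·gcd(y, z), y) = gcd(x·y, x·z, y)`. Multiplying `x : (y : z)` by
this product of two gcds first restores `x`, then scales it to `gcd(x·y, x·z)`. -/

theorem colon_mul_gcd (x y : ℕ) : colon x y * Nat.gcd x y = x :=
  Nat.div_mul_cancel (Nat.gcd_dvd_left x y)

theorem colon_pos {x : ℕ} (hx : 0 < x) (y : ℕ) : 0 < colon x y :=
  Nat.div_gcd_pos_of_pos_left y hx

theorem gcd_colon_mul_gcd (x y z : ℕ) :
    Nat.gcd x (colon y z) * Nat.gcd y z = Nat.gcd y (x * z) :=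
  calc
    Nat.gcd x (colon y z) * Nat.gcd y z = Nat.gcd (x * Nat.gcd y z) y := by
      rw [← Nat.gcd_mul_right, colon_mul_gcd]
    _ = Nat.gcd (Nat.gcd (x * z) (x * y)) y := by
      rw [← Nat.gcd_mul_left, Nat.gcd_comm (x * y)]
    _ = Nat.gcd y (x * z) := by
      rw [Nat.gcd_assoc, Nat.gcd_mul_left_left, Nat.gcd_comm]

theorem colon_colon_mul_gcd (x y z : ℕ) :
    colon x (colon y z) * Nat.gcd y (x * z) = Nat.gcd (x * y) (x * z) := by
  rw [← gcd_colon_mul_gcd, ← mul_assoc, colon_mul_gcd, Nat.gcd_mul_left]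

theorem colon_colon_mul_colon (x : ℕ) {y : ℕ} (hy : 0 < y) (z : ℕ) :
    colon x (colon y z) * colon z y = colon (x * z) y := by
  refine Nat.eq_of_mul_eq_mul_right (Nat.gcd_pos_of_pos_left (x * z) hy) ?_
  calc
    colon x (colon y z) * colon z y * Nat.gcd y (x * z)
        = Nat.gcd (x * y) (x * z) * colon z y := by
      rw [mul_right_comm, colon_colon_mul_gcd]
    _ = x * (colon z y * Nat.gcd z y) := by
      rw [Nat.gcd_mul_left, Nat.gcd_comm y, mul_assoc, mul_comm (Nat.gcd z y)]
    _ = colon (x * z) y * Nat.gcd y (x * z) := by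
      rw [colon_mul_gcd, Nat.gcd_comm y, colon_mul_gcd]

/-- `x : (y : z) = ((x·z) : y) / (z : y) = gcd(x·y, x·z) / gcd(y, x·z)`, where all
indicated divisions are exact; equivalently, `(x : (y : z))·(z : y) = (x·z) : y` and
`(x : (y : z))·gcd(y, x·z) = gcd(x·y, x·z)`. -/
theorem colon_colon_right (x y z : ℕ) (hx : 0 < x) (hy : 0 < y) (hz : 0 < z) :
    colon z y ∣ colon (x * z) y ∧
    Nat.gcd y (x * z) ∣ Nat.gcd (x * y) (x * z) ∧
    colon x (colon y z) = colon (x * z) y / colon z y ∧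
    colon x (colon y z) = Nat.gcd (x * y) (x * z) / Nat.gcd y (x * z) ∧
    colon x (colon y z) * colon z y = colon (x * z) y ∧
    colon x (colon y z) * Nat.gcd y (x * z) = Nat.gcd (x * y) (x * z) := by
  have hcolon := colon_colon_mul_colon x hy z
  have hgcd := colon_colon_mul_gcd x y z
  exact ⟨Dvd.intro_left _ hcolon, Dvd.intro_left _ hgcd,
    Nat.eq_div_of_mul_eq_left (colon_pos hz y).ne' hcolon,
    Nat.eq_div_of_mul_eq_left (Nat.gcd_pos_of_pos_left _ hy).ne' hgcd, hcolon, hgcd⟩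
end

section
/- For all positive integers x, y, z one has (x : y) / (x : (y : z)) = gcd(y, x·z) / (gcd(x,y)·gcd(y,z)) as an identity of rational numbers; equivalently, (x : y)·gcd(x, y)·gcd(y, z) = (x : (y : z))·gcd(y, x·z) in the positive integers. -/
theorem colon_mul_gcd_mul_gcd (x y z : ℕ) :
    colon x y * Nat.gcd x y * Nat.gcd y z = colon x (colon y z) * Nat.gcd y (x * z) :=
  calc
    colon x y * Nat.gcd x y * Nat.gcd y z
      = colon x (colon y z) * Nat.gcd x (colon y z) * Nat.gcd y z := by simp only [colon_mul_gcd]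
    _ = colon x (colon y z) * Nat.gcd y (x * z) := by rw [mul_assoc, gcd_colon_mul_gcd]

/-- `(x : y) / (x : (y : z)) = gcd(y, x·z) / (gcd(x,y)·gcd(y,z))` as rational numbers;
equivalently `(x : y)·gcd(x,y)·gcd(y,z) = (x : (y : z))·gcd(y, x·z)` in the positive
integers. -/
theorem colon_div_colon (x y z : ℕ) (hx : 0 < x) (hy : 0 < y) (hz : 0 < z) :
    ((colon x y : ℚ) / (colon x (colon y z) : ℚ) =
      (Nat.gcd y (x * z) : ℚ) / ((Nat.gcd x y : ℚ) * (Nat.gcd y z : ℚ))) ∧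
    colon x y * Nat.gcd x y * Nat.gcd y z = colon x (colon y z) * Nat.gcd y (x * z) := by
  have product_eq := colon_mul_gcd_mul_gcd x y z
  refine ⟨?_, product_eq⟩
  have colon_ne_zero : (colon x (colon y z) : ℚ) ≠ 0 := mod_cast (colon_pos hx _).ne'
  have gcds_ne_zero : (Nat.gcd x y : ℚ) * (Nat.gcd y z : ℚ) ≠ 0 :=
    mod_cast (Nat.mul_pos (Nat.gcd_pos_of_pos_left y hx) (Nat.gcd_pos_of_pos_left z hy)).ne'
  rw [div_eq_div_iff colon_ne_zero gcds_ne_zero, ← mul_assoc, mul_comm (Nat.gcd y (x * z) : ℚ)]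
  exact_mod_cast product_eq
end

section
/- For every list b = (b_1, …, b_s) of positive integers and every 1 ≤ j ≤ s−1, the integer (b; j) divides (b; j+1). In particular (b; 1) = gcd(b_1, …, b_s), (b; s) = lcm(b_1, …, b_s), and the list ((b;1), (b;2), …, (b;s)) is a divisor string. -/
/-- The least common multiple of the entries of a list of naturals. -/
def lcmList (l : List ℕ) : ℕ := l.foldr Nat.lcm 1

/-- The greatest common divisor of the entries of a list of naturals. -/
def gcdList (l : List ℕ) : ℕ := l.foldr Nat.gcd 0

/-- `(b; j)`: the gcd of the lcms of all length-`j` sublists (i.e. subsequences,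
corresponding to index sets `i₁ < ⋯ < i_j`) of `b`. -/
def lcmGcd (b : List ℕ) (j : ℕ) : ℕ :=
  gcdList (((b.sublists).filter (fun s => s.length == j)).map lcmList)

theorem dvd_gcdList_iff {d : ℕ} {l : List ℕ} : d ∣ gcdList l ↔ ∀ x ∈ l, d ∣ x := by
  induction l with
  | nil => simp [gcdList]
  | cons a l ih =>
    rw [List.forall_mem_cons, ← ih]
    exact Nat.dvd_gcd_iff

theorem lcmList_dvd_iff {d : ℕ} {l : List ℕ} : lcmList l ∣ d ↔ ∀ x ∈ l, x ∣ d := by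
  induction l with
  | nil => simp [lcmList]
  | cons a l ih =>
    rw [List.forall_mem_cons, ← ih]
    exact Nat.lcm_dvd_iff

theorem dvd_lcmList_of_mem {x : ℕ} {l : List ℕ} (hx : x ∈ l) : x ∣ lcmList l :=
  lcmList_dvd_iff.mp dvd_rfl x hx

theorem lcmList_dvd_lcmList_of_subset {l l' : List ℕ} (h : l ⊆ l') : lcmList l ∣ lcmList l' :=
  lcmList_dvd_iff.mpr fun _ hx => dvd_lcmList_of_mem (h hx)

theorem lcmList_singleton (x : ℕ) : lcmList [x] = x :=
  Nat.lcm_one_right x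

theorem dvd_lcmGcd_iff {d : ℕ} {b : List ℕ} {j : ℕ} :
    d ∣ lcmGcd b j ↔ ∀ l : List ℕ, l.Sublist b → l.length = j → d ∣ lcmList l := by
  simp only [lcmGcd, dvd_gcdList_iff, List.forall_mem_map, List.mem_filter, List.mem_sublists,
    beq_iff_eq, and_imp]

theorem lcmGcd_dvd_lcmList {b l : List ℕ} {j : ℕ} (hl : l.Sublist b) (hlen : l.length = j) :
    lcmGcd b j ∣ lcmList l :=
  dvd_lcmGcd_iff.mp dvd_rfl l hl hlen

theorem lcmGcd_dvd_lcmGcd_of_le (b : List ℕ) {j k : ℕ} (hjk : j ≤ k) :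
    lcmGcd b j ∣ lcmGcd b k := by
  refine dvd_lcmGcd_iff.mpr fun l hl hlen => ?_
  have htake : (l.take j).length = j := List.length_take_of_le (hlen ▸ hjk)
  calc lcmGcd b j ∣ lcmList (l.take j) := lcmGcd_dvd_lcmList ((l.take_sublist j).trans hl) htake
    _ ∣ lcmList l := lcmList_dvd_lcmList_of_subset (l.take_subset j)

theorem lcmGcd_one (b : List ℕ) : lcmGcd b 1 = gcdList b := by
  refine Nat.dvd_antisymm (dvd_gcdList_iff.mpr fun x hx => ?_)
    (dvd_lcmGcd_iff.mpr fun l hl hlen => ?_)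
  · simpa only [lcmList_singleton] using
      lcmGcd_dvd_lcmList (List.singleton_sublist.mpr hx) List.length_singleton
  · obtain ⟨x, rfl⟩ := List.length_eq_one_iff.mp hlen
    rw [lcmList_singleton]
    exact dvd_gcdList_iff.mp dvd_rfl x (List.singleton_sublist.mp hl)

theorem lcmGcd_length (b : List ℕ) : lcmGcd b b.length = lcmList b := by
  refine Nat.dvd_antisymm (lcmGcd_dvd_lcmList (List.Sublist.refl b) rfl)
    (dvd_lcmGcd_iff.mpr fun l hl hlen => ?_)
  rw [hl.eq_of_length hlen]

theorem pairwise_dvd_map_range_lcmGcd (b : List ℕ) (n : ℕ) :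
    ((List.range n).map fun j => lcmGcd b (j + 1)).Pairwise (· ∣ ·) :=
  List.pairwise_lt_range.map _ fun _ _ h => lcmGcd_dvd_lcmGcd_of_le b (Nat.succ_le_succ h.le)

/-- For a list `b = (b₁, …, b_s)` of positive integers and `1 ≤ j ≤ s−1` one has
`(b;j) ∣ (b;j+1)`.  In particular `(b;1) = gcd(b₁,…,b_s)`, `(b;s) = lcm(b₁,…,b_s)`,
and the list `((b;1),…,(b;s))` is a divisor string. -/
theorem lcmGcd_dvd_succ (b : List ℕ) (hne : b ≠ []) (hpos : ∀ x ∈ b, 0 < x) :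
    (∀ j, 1 ≤ j → j ≤ b.length - 1 → lcmGcd b j ∣ lcmGcd b (j + 1)) ∧
    lcmGcd b 1 = gcdList b ∧
    lcmGcd b b.length = lcmList b ∧
    List.Chain' (· ∣ ·) ((List.range b.length).map fun j => lcmGcd b (j + 1)) :=
  ⟨fun j _ _ => lcmGcd_dvd_lcmGcd_of_le b j.le_succ, lcmGcd_one b, lcmGcd_length b,
    (pairwise_dvd_map_range_lcmGcd b b.length).isChain⟩
end

section
/- For every list b = (b_1, …, b_s) of positive integers and every 1 ≤ j ≤ s, the integer (b; j) equals the least common multiple of the greatest common divisors gcd(b_{i_1}, …, b_{i_{s+1−j}}) taken over all size-(s+1−j) subsets i_1 < ⋯ < i_{s+1−j} of {1, …, s}. -/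
/-- The lcm of the gcds of all length-`j` sublists of `b`. -/
def gcdLcm (b : List ℕ) (j : ℕ) : ℕ :=
  lcmList (((b.sublists).filter (fun s => s.length == j)).map gcdList)

/-!
The identity holds for meets and joins in any bounded distributive lattice: sorting the submultisets
by whether they contain a chosen element gives a Pascal-type recurrence for each side, and the
modular law identifies the two recurrences. Sending `n` to the set of prime powers dividing `n`
turns gcd and lcm into intersection and union, which carries the identity from sets back to `ℕ`.
-/

theorem sup_multiset_inf {α : Type*} [DistribLattice α] [OrderTop α] (a : α) (s : Multiset α) :
    a ⊔ s.inf = (s.map (a ⊔ ·)).inf := by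
  induction s using Multiset.induction with
  | empty => simp
  | cons b s ih => rw [Multiset.inf_cons, sup_inf_left, ih, Multiset.map_cons, Multiset.inf_cons]

section Lattice

variable {α : Type*} [Lattice α] [BoundedOrder α]

/-- The meet of the joins of all `j`-element submultisets of `s`: the lattice form of `(b; j)`. -/
def infSups (j : ℕ) (s : Multiset α) : α :=
  ((s.powersetCard j).map Multiset.sup).inf

/-- The join of the meets of all `k`-element submultisets of `s`, order dual to `infSups`. -/
def supInfs (k : ℕ) (s : Multiset α) : α :=
  ((s.powersetCard k).map Multiset.inf).sup

theorem infSups_zero (s : Multiset α) : infSups 0 s = ⊥ := by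
  simp [infSups]

theorem supInfs_zero (s : Multiset α) : supInfs 0 s = ⊤ :=
  infSups_zero (α := αᵒᵈ) s

theorem infSups_of_card_lt {j : ℕ} {s : Multiset α} (h : s.card < j) : infSups j s = ⊤ := by
  simp [infSups, Multiset.powersetCard_eq_empty j h]

theorem supInfs_of_card_lt {k : ℕ} {s : Multiset α} (h : s.card < k) : supInfs k s = ⊥ :=
  infSups_of_card_lt (α := αᵒᵈ) h

theorem supInfs_succ_le (k : ℕ) (s : Multiset α) : supInfs (k + 1) s ≤ supInfs k s := by
  refine Multiset.sup_le.2 (Multiset.forall_mem_map_iff.2 fun t ht => ?_)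
  obtain ⟨hts, htk⟩ := Multiset.mem_powersetCard.1 ht
  obtain ⟨a, u, rfl, huk⟩ := Multiset.card_eq_succ_iff.1 htk
  have hu : u ∈ s.powersetCard k :=
    Multiset.mem_powersetCard.2 ⟨(u.le_cons_self a).trans hts, huk⟩
  calc (a ::ₘ u).inf
    _ ≤ u.inf := Multiset.inf_cons a u ▸ inf_le_right
    _ ≤ supInfs k s := Multiset.le_sup (Multiset.mem_map_of_mem _ hu)

end Lattice

section DistribLattice

variable {α : Type*} [DistribLattice α] [BoundedOrder α]

theorem infSups_succ_cons (j : ℕ) (a : α) (s : Multiset α) :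
    infSups (j + 1) (a ::ₘ s) = infSups (j + 1) s ⊓ (a ⊔ infSups j s) := by
  simp only [infSups, Multiset.powersetCard_cons, Multiset.map_add, Multiset.inf_add,
    sup_multiset_inf, Multiset.map_map, Function.comp_def, Multiset.sup_cons]

theorem supInfs_succ_cons (k : ℕ) (a : α) (s : Multiset α) :
    supInfs (k + 1) (a ::ₘ s) = supInfs (k + 1) s ⊔ (a ⊓ supInfs k s) :=
  infSups_succ_cons (α := αᵒᵈ) k a s

theorem lcmGcd_eq_gcdLcm_general {j k : ℕ} {s : Multiset α} (h : j + k = s.card + 1) :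
    infSups j s = supInfs k s := by
  induction s using Multiset.induction generalizing j k with
  | empty =>
    rw [Multiset.card_zero] at h
    obtain ⟨rfl, rfl⟩ | ⟨rfl, rfl⟩ : j = 0 ∧ k = 1 ∨ j = 1 ∧ k = 0 := by omega
    · rw [infSups_zero, supInfs_of_card_lt (by simp)]
    · rw [supInfs_zero, infSups_of_card_lt (by simp)]
  | cons a s ih =>
    rw [Multiset.card_cons] at h
    match j, k with
    | 0, k => rw [infSups_zero, supInfs_of_card_lt (by rw [Multiset.card_cons]; omega)]
    | j, 0 => rw [supInfs_zero, infSups_of_card_lt (by rw [Multiset.card_cons]; omega)]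
    | j + 1, k + 1 =>
      calc infSups (j + 1) (a ::ₘ s)
        _ = infSups (j + 1) s ⊓ (a ⊔ infSups j s) := infSups_succ_cons j a s
        _ = supInfs k s ⊓ (a ⊔ supInfs (k + 1) s) := by
          rw [ih (j := j + 1) (k := k) (by omega), ih (j := j) (k := k + 1) (by omega)]
        _ = supInfs (k + 1) s ⊔ (a ⊓ supInfs k s) := by
          rw [inf_comm, sup_comm, sup_inf_assoc_of_le a (supInfs_succ_le k s)]
        _ = supInfs (k + 1) (a ::ₘ s) := (supInfs_succ_cons k a s).symm

end DistribLattice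

theorem filter_card_powerset {α : Type*} (n : ℕ) (s : Multiset α) :
    s.powerset.filter (fun t => t.card = n) = s.powersetCard n := by
  induction s using Multiset.induction generalizing n with
  | empty => cases n <;> simp [Multiset.filter_singleton, Multiset.powersetCard_zero_right]
  | cons a s ih =>
    rw [Multiset.powerset_cons, Multiset.filter_add, ih, Multiset.filter_map]
    cases n with
    | zero => simp
    | succ n => simp [Multiset.powersetCard_cons, ih]

theorem map_coe_filter_length_sublists {α : Type*} (n : ℕ) (l : List α) :
    Multiset.map Multiset.ofList (l.sublists.filter (fun t => t.length == n) : Multiset (List α)) =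
      (l : Multiset α).powersetCard n := by
  rw [← filter_card_powerset, Multiset.powerset_coe, ← Multiset.map_coe, Multiset.filter_map,
    Multiset.filter_coe]
  rfl

theorem isPrimePow_dvd_lcm_iff {q a b : ℕ} (hq : IsPrimePow q) :
    q ∣ a.lcm b ↔ q ∣ a ∨ q ∣ b := by
  rcases eq_or_ne a 0 with rfl | ha
  · simp
  rcases eq_or_ne b 0 with rfl | hb
  · simp
  obtain ⟨p, k, hp, -, rfl⟩ := (isPrimePow_nat_iff q).1 hq
  rw [hp.pow_dvd_iff_le_factorization (Nat.lcm_ne_zero ha hb), Nat.factorization_lcm ha hb,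
    Finsupp.sup_apply, le_sup_iff, hp.pow_dvd_iff_le_factorization ha,
    hp.pow_dvd_iff_le_factorization hb]

/-- The set of prime powers `p ^ k`, `k ≥ 1`, that divide `n`. This embeds the divisibility lattice
of `ℕ`, with bottom `1` and top `0`, into a lattice of sets. -/
def primePowDivisors (n : ℕ) : Set {q : ℕ // IsPrimePow q} :=
  {q | q.1 ∣ n}

theorem primePowDivisors_injective : Function.Injective primePowDivisors := by
  have dvd_of_subset {m n : ℕ} (h : primePowDivisors m ⊆ primePowDivisors n) : m ∣ n := by
    refine (Nat.dvd_iff_prime_pow_dvd_dvd n m).2 fun p k hp hpm => ?_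
    rcases eq_or_ne k 0 with rfl | hk
    · simp
    · exact h (a := ⟨p ^ k, hp.isPrimePow.pow hk⟩) hpm
  exact fun m n h => Nat.dvd_antisymm (dvd_of_subset h.subset) (dvd_of_subset h.superset)

theorem primePowDivisors_lcmList (l : List ℕ) :
    primePowDivisors (lcmList l) = (Multiset.map primePowDivisors l).sup := by
  induction l with
  | nil => exact Set.eq_empty_of_forall_notMem fun q hq => q.2.ne_one (Nat.dvd_one.1 hq)
  | cons a l ih =>
    rw [← Multiset.cons_coe, Multiset.map_cons, Multiset.sup_cons, ← ih]
    exact Set.ext fun q => isPrimePow_dvd_lcm_iff q.2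

theorem primePowDivisors_gcdList (l : List ℕ) :
    primePowDivisors (gcdList l) = (Multiset.map primePowDivisors l).inf := by
  induction l with
  | nil => exact Set.eq_univ_of_forall fun q => dvd_zero q.1
  | cons a l ih =>
    rw [← Multiset.cons_coe, Multiset.map_cons, Multiset.inf_cons, ← ih]
    exact Set.ext fun q => Nat.dvd_gcd_iff

theorem primePowDivisors_lcmGcd (b : List ℕ) (j : ℕ) :
    primePowDivisors (lcmGcd b j) = infSups j (Multiset.map primePowDivisors b) := by
  rw [lcmGcd, primePowDivisors_gcdList, infSups, Multiset.powersetCard_map,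
    ← map_coe_filter_length_sublists, ← Multiset.map_coe]
  simp only [Multiset.map_map, Function.comp_def, primePowDivisors_lcmList]

theorem primePowDivisors_gcdLcm (b : List ℕ) (k : ℕ) :
    primePowDivisors (gcdLcm b k) = supInfs k (Multiset.map primePowDivisors b) := by
  rw [gcdLcm, primePowDivisors_lcmList, supInfs, Multiset.powersetCard_map,
    ← map_coe_filter_length_sublists, ← Multiset.map_coe]
  simp only [Multiset.map_map, Function.comp_def, primePowDivisors_gcdList]

/-- For a list `b = (b₁, …, b_s)` of positive integers and `1 ≤ j ≤ s`, the integer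
`(b; j)` equals the lcm of the gcds of all size-`(s+1−j)` subsets of `b`. -/
theorem lcmGcd_eq_gcdLcm (b : List ℕ) (hpos : ∀ x ∈ b, 0 < x)
    (j : ℕ) (h1 : 1 ≤ j) (h2 : j ≤ b.length) :
    lcmGcd b j = gcdLcm b (b.length + 1 - j) := by
  apply primePowDivisors_injective
  rw [primePowDivisors_lcmGcd, primePowDivisors_gcdLcm]
  exact lcmGcd_eq_gcdLcm_general (by simp only [Multiset.card_map, Multiset.coe_card]; omega)
end

section
/- Let B be a multiset of positive integers of size s, let x and y be two elements of B (counted with multiplicity), and let B′ be the multiset obtained from B by removing x and y and inserting gcd(x, y) and lcm(x, y). Then for every 1 ≤ j ≤ s one has (B; j) = (B′; j), i.e., the gcd over all size-j sub-multisets of the lcm of the sub-multiset is unchanged by the move x, y ↦ gcd(x,y), lcm(x,y). Consequently, iterating this move on a multiset always stabilizes (once every element divides the lcm-gcd chain) at the same divisor string ((B;1), …, (B;s)). -/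
/-- `(B; j)` for a multiset `B` of naturals: the gcd of the lcms of all size-`j`
sub-multisets of `B`. -/
def lcmGcdM (B : Multiset ℕ) (j : ℕ) : ℕ :=
  ((B.powerset.filter (fun s => Multiset.card s = j)).map Multiset.lcm).gcd

/-!
Splitting the size-`(j + 1)` sub-multisets of `a ::ₘ C` according to whether they use the head `a`,
and distributing lcm over gcd, gives `(a ::ₘ C; j + 1) = gcd((C; j + 1), lcm(a, (C; j)))`. Applied
twice, this expresses `(x ::ₘ y ::ₘ C; j)` through `C`, `gcd(x, y)` and `lcm(x, y)` alone, and the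
pair `gcd(x, y), lcm(x, y)` has the same gcd and lcm as the pair `x, y`.
-/

theorem powersetCard_eq_filter_powerset {α : Type*} (n : ℕ) (s : Multiset α) :
    s.powersetCard n = s.powerset.filter (fun t ↦ t.card = n) := by
  induction s using Multiset.induction generalizing n with
  | empty => cases n <;> simp [Multiset.filter_singleton, Multiset.powersetCard_zero_right]
  | cons a s ih =>
    cases n with
    | zero => simp [Multiset.filter_map, ← ih]
    | succ n => simp [Multiset.filter_map, ih]

section Distributivity

open GCDMonoid

variable {α : Type*} [CommMonoidWithZero α]

theorem gcd_lcm_lcm_dvd_lcm_gcd [GCDMonoid α] (a b c : α) :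
    gcd (lcm a c) (lcm b c) ∣ lcm (gcd a b) c := by
  by_cases hzero : gcd (gcd a b) c = 0
  · have hc : c = 0 := ((gcd_eq_zero_iff _ _).1 hzero).2
    simp [hc]
  have mul_gcd_dvd {m x : α} (hm : m ∣ lcm x c) (hx : gcd a b ∣ x) :
      m * gcd (gcd a b) c ∣ x * c :=
    calc
      m * gcd (gcd a b) c ∣ lcm x c * gcd x c := mul_dvd_mul hm (gcd_dvd_gcd hx dvd_rfl)
      _ = gcd x c * lcm x c := mul_comm _ _
      _ ∣ x * c := (gcd_mul_lcm x c).dvd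
  refine (mul_dvd_mul_iff_right hzero).1 ?_
  calc
    gcd (lcm a c) (lcm b c) * gcd (gcd a b) c ∣ gcd (a * c) (b * c) :=
      dvd_gcd (mul_gcd_dvd (gcd_dvd_left _ _) (gcd_dvd_left _ _))
        (mul_gcd_dvd (gcd_dvd_right _ _) (gcd_dvd_right _ _))
    _ ∣ gcd a b * c := (gcd_mul_right' c a b).dvd
    _ ∣ gcd (gcd a b) c * lcm (gcd a b) c := (gcd_mul_lcm _ _).symm.dvd
    _ = lcm (gcd a b) c * gcd (gcd a b) c := mul_comm _ _

variable [NormalizedGCDMonoid α]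

theorem lcm_gcd_right (a b c : α) : lcm (gcd a b) c = gcd (lcm a c) (lcm b c) :=
  dvd_antisymm_of_normalize_eq (normalize_lcm _ _) (normalize_gcd _ _)
    (dvd_gcd (lcm_dvd_lcm (gcd_dvd_left _ _) dvd_rfl) (lcm_dvd_lcm (gcd_dvd_right _ _) dvd_rfl))
    (gcd_lcm_lcm_dvd_lcm_gcd a b c)

theorem lcm_gcd_left (a b c : α) : lcm a (gcd b c) = gcd (lcm a b) (lcm a c) := by
  simp only [lcm_comm a, lcm_gcd_right]

theorem gcd_map_lcm_left (a : α) (s : Multiset α) : (s.map (lcm a)).gcd = lcm a s.gcd := by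
  induction s using Multiset.induction with
  | empty => simp
  | cons b s ih => rw [Multiset.map_cons, Multiset.gcd_cons, Multiset.gcd_cons, ih, lcm_gcd_left]

theorem gcd_gcd_lcm (a b : α) : gcd (gcd a b) (lcm a b) = gcd a b :=
  (gcd_eq_left_iff _ _ (normalize_gcd a b)).2 ((gcd_dvd_left a b).trans (dvd_lcm_left a b))

theorem lcm_gcd_lcm (a b : α) : lcm (gcd a b) (lcm a b) = lcm a b :=
  (lcm_eq_right_iff _ _ (normalize_lcm a b)).2 ((gcd_dvd_left a b).trans (dvd_lcm_left a b))

end Distributivity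

section GcdOfLcms

open GCDMonoid

variable {α : Type*} [CommMonoidWithZero α] [NormalizedGCDMonoid α]

/-- The invariant `(B; j)` over a normalized GCD monoid. It is `0`, the greatest element for
divisibility, when `B` has fewer than `j` elements. -/
def gcdOfLcms (B : Multiset α) (j : ℕ) : α :=
  ((B.powersetCard j).map Multiset.lcm).gcd

theorem lcmGcdM_eq_gcdOfLcms (B : Multiset ℕ) (j : ℕ) : lcmGcdM B j = gcdOfLcms B j := by
  rw [lcmGcdM, gcdOfLcms, powersetCard_eq_filter_powerset]

theorem gcdOfLcms_zero (B : Multiset α) : gcdOfLcms B 0 = 1 := by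
  simp [gcdOfLcms]

theorem gcdOfLcms_cons_succ (a : α) (C : Multiset α) (j : ℕ) :
    gcdOfLcms (a ::ₘ C) (j + 1) = gcd (gcdOfLcms C (j + 1)) (lcm a (gcdOfLcms C j)) := by
  simp only [gcdOfLcms, Multiset.powersetCard_cons, Multiset.map_add, Multiset.gcd_add,
    ← gcd_map_lcm_left, Multiset.map_map, Function.comp_def, Multiset.lcm_cons]

theorem gcdOfLcms_cons_cons_one (x y : α) (C : Multiset α) :
    gcdOfLcms (x ::ₘ y ::ₘ C) 1 = gcd (gcdOfLcms C 1) (lcm (gcd x y) 1) := by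
  simp only [gcdOfLcms_cons_succ _ _ 0, gcdOfLcms_zero, lcm_gcd_right, gcd_assoc,
    gcd_comm (lcm x 1)]

theorem gcdOfLcms_cons_cons_add_two (x y : α) (C : Multiset α) (j : ℕ) :
    gcdOfLcms (x ::ₘ y ::ₘ C) (j + 2) =
      gcd (gcdOfLcms C (j + 2))
        (gcd (lcm (gcd x y) (gcdOfLcms C (j + 1))) (lcm (lcm x y) (gcdOfLcms C j))) := by
  set u := gcdOfLcms C (j + 2)
  set v := gcdOfLcms C (j + 1)
  set w := gcdOfLcms C j
  calc
    gcdOfLcms (x ::ₘ y ::ₘ C) (j + 2) = gcd (gcd u (lcm y v)) (lcm x (gcd v (lcm y w))) := by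
      simp only [gcdOfLcms_cons_succ, u, v, w]
    _ = gcd u (gcd (gcd (lcm x v) (lcm y v)) (lcm (lcm x y) w)) := by
      rw [lcm_gcd_left, ← lcm_assoc, gcd_assoc, ← gcd_assoc (lcm y v), gcd_comm (lcm y v)]
    _ = gcd u (gcd (lcm (gcd x y) v) (lcm (lcm x y) w)) := by rw [lcm_gcd_right]

theorem gcdOfLcms_gcd_cons_lcm_cons (x y : α) (C : Multiset α) (j : ℕ) :
    gcdOfLcms (gcd x y ::ₘ lcm x y ::ₘ C) j = gcdOfLcms (x ::ₘ y ::ₘ C) j := by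
  match j with
  | 0 => simp only [gcdOfLcms_zero]
  | 1 => simp only [gcdOfLcms_cons_cons_one, gcd_gcd_lcm]
  | j + 2 => simp only [gcdOfLcms_cons_cons_add_two, gcd_gcd_lcm, lcm_gcd_lcm]

theorem lcmGcdM_gcd_lcm_move_general [DecidableEq α] (B : Multiset α) (x y : α)
    (hx : x ∈ B) (hy : y ∈ B.erase x) (j : ℕ) :
    gcdOfLcms B j = gcdOfLcms (gcd x y ::ₘ lcm x y ::ₘ (B.erase x).erase y) j := by
  rw [gcdOfLcms_gcd_cons_lcm_cons, Multiset.cons_erase hy, Multiset.cons_erase hx]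

end GcdOfLcms

/-- Replacing two elements `x, y` of a multiset `B` of positive integers (counted with
multiplicity) by `gcd(x,y)` and `lcm(x,y)` leaves all the invariants `(B; j)`
(for `1 ≤ j ≤ |B|`) unchanged. -/
theorem lcmGcdM_gcd_lcm_move (B : Multiset ℕ) (hpos : ∀ x ∈ B, 0 < x)
    (x y : ℕ) (hx : x ∈ B) (hy : y ∈ B.erase x)
    (j : ℕ) (h1 : 1 ≤ j) (h2 : j ≤ Multiset.card B) :
    lcmGcdM B j = lcmGcdM (Nat.gcd x y ::ₘ Nat.lcm x y ::ₘ (B.erase x).erase y) j := by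
  rw [lcmGcdM_eq_gcdOfLcms, lcmGcdM_eq_gcdOfLcms]
  exact lcmGcdM_gcd_lcm_move_general B x y hx hy j
end

section
/- Let c = (c_1, …, c_k) and d = (d_1, …, d_k) be lists of positive integers of the same length k. Then Y_{c,d} = 1 if either of the following conditions holds: (1) for every 1 ≤ j ≤ k the product c_j·c_{j+1}⋯c_k divides d_j·d_{j+1}⋯d_k; or (2) k ≥ 2 and c_{k−1}·c_k divides d_k. -/
/-- The recursively defined quantities `Y_j`: `Y₀ = 1` and
`Y_j = gcd((c_j·Y_{j−1}) / gcd(c_j·Y_{j−1}, d_j), c_j)`. -/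
def Yaux (c d : List ℕ) : ℕ → ℕ
  | 0 => 1
  | j + 1 =>
      Nat.gcd ((c.getD j 1 * Yaux c d j) / Nat.gcd (c.getD j 1 * Yaux c d j) (d.getD j 1))
        (c.getD j 1)

/-- `Y_{c,d} := Y_k` where `k` is the common length of `c` and `d`. -/
def Ycd (c d : List ℕ) : ℕ := Yaux c d c.length

/-!
The product `Y_j · (c_{j+1} ⋯ c_k)` keeps dividing `d_{j+1} ⋯ d_k` as `j` grows, as long as the
tail products of `c` divide those of `d`: if `x ∣ y` and `a x ∣ b y`, then `a x` divides both `a y`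
and `b y`, hence `gcd(a, b) y`, and `gcd(a, b)` can be cancelled. At `j = k` both tails are empty,
so `Y_k ∣ 1`. Condition (1) starts this induction at `j = 0`, where `Y_0 = 1`. Condition (2) starts
it at `j = k - 1`, where `Y_{k-1} · c_k ∣ c_{k-1} · c_k ∣ d_k` because `Y_{k-1} ∣ c_{k-1}`.
-/

theorem div_gcd_mul_dvd {a b x y : ℕ} (hb : 0 < b) (hxy : x ∣ y) (h : a * x ∣ b * y) :
    a / a.gcd b * x ∣ y := by
  have hgcd : a * x ∣ a.gcd b * y := by
    rw [← Nat.gcd_mul_right]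
    exact Nat.dvd_gcd (Nat.mul_dvd_mul_left a hxy) h
  refine Nat.dvd_of_mul_dvd_mul_left (Nat.gcd_pos_of_pos_right a hb) ?_
  rwa [← mul_assoc, Nat.mul_div_cancel' (Nat.gcd_dvd_left a b)]

theorem getD_of_forall_mem {α : Type*} {p : α → Prop} {l : List α} {a : α}
    (hl : ∀ x ∈ l, p x) (ha : p a) (n : ℕ) : p (l.getD n a) := by
  rcases lt_or_ge n l.length with hn | hn
  · rw [List.getD_eq_getElem _ _ hn]
    exact hl _ (List.getElem_mem hn)
  · rwa [List.getD_eq_default _ _ hn]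

theorem getD_one_mul_prod_drop_succ {M : Type*} [Monoid M] (l : List M) (n : ℕ) :
    l.getD n 1 * (l.drop (n + 1)).prod = (l.drop n).prod := by
  simpa [List.tail_drop, List.getElem?_drop] using (l.drop n).getElem?_zero_mul_tail_prod

theorem prod_drop_of_length_eq_succ {M : Type*} [Monoid M] {l : List M} {n : ℕ}
    (hl : l.length = n + 1) : (l.drop n).prod = l.getD n 1 := by
  rw [← getD_one_mul_prod_drop_succ, ← hl, List.drop_length, List.prod_nil, mul_one]

theorem prod_drop_dvd_of_length_le {M : Type*} [Monoid M] {l : List M} {n : ℕ}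
    (hn : l.length ≤ n) (x : M) : (l.drop n).prod ∣ x := by
  rw [List.drop_eq_nil_of_le hn, List.prod_nil]
  exact one_dvd x

theorem Yaux_succ_dvd_getD (c d : List ℕ) (j : ℕ) : Yaux c d (j + 1) ∣ c.getD j 1 :=
  Nat.gcd_dvd_right _ _

section

variable {c d : List ℕ}

theorem Yaux_succ_mul_prod_drop_dvd {j : ℕ} (hd : 0 < d.getD j 1)
    (htail : (c.drop (j + 1)).prod ∣ (d.drop (j + 1)).prod)
    (h : Yaux c d j * (c.drop j).prod ∣ (d.drop j).prod) :
    Yaux c d (j + 1) * (c.drop (j + 1)).prod ∣ (d.drop (j + 1)).prod := by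
  rw [← getD_one_mul_prod_drop_succ c, ← getD_one_mul_prod_drop_succ d, ← mul_assoc,
    mul_comm (Yaux c d j)] at h
  exact (Nat.mul_dvd_mul_right (Nat.gcd_dvd_left _ _) _).trans (div_gcd_mul_dvd hd htail h)

theorem Yaux_mul_prod_drop_dvd_of_le {m n : ℕ} (hd : ∀ x ∈ d, 0 < x) (hmn : m ≤ n)
    (hm : Yaux c d m * (c.drop m).prod ∣ (d.drop m).prod)
    (htail : ∀ j, m < j → j ≤ n → (c.drop j).prod ∣ (d.drop j).prod) :
    Yaux c d n * (c.drop n).prod ∣ (d.drop n).prod := by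
  induction n, hmn using Nat.le_induction with
  | base => exact hm
  | succ n hmn ih =>
    have hn := ih fun j hj hjn => htail j hj (hjn.trans n.le_succ)
    exact Yaux_succ_mul_prod_drop_dvd (getD_of_forall_mem hd one_pos n)
      (htail (n + 1) (Nat.lt_succ_of_le hmn) le_rfl) hn

theorem Ycd_eq_one_of_Yaux_mul_prod_drop_dvd {m : ℕ} (hlen : d.length ≤ c.length)
    (hd : ∀ x ∈ d, 0 < x) (hmc : m ≤ c.length)
    (hm : Yaux c d m * (c.drop m).prod ∣ (d.drop m).prod)
    (htail : ∀ j, m < j → (c.drop j).prod ∣ (d.drop j).prod) :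
    Ycd c d = 1 := by
  have hfinal : Yaux c d c.length * (c.drop c.length).prod ∣ (d.drop c.length).prod :=
    Yaux_mul_prod_drop_dvd_of_le hd hmc hm fun j hj _ => htail j hj
  rw [List.drop_length, List.drop_eq_nil_of_le hlen, List.prod_nil, mul_one] at hfinal
  exact Nat.dvd_one.mp hfinal

end

/-- `Y_{c,d} = 1` if either (1) `c_j·c_{j+1}⋯c_k ∣ d_j·d_{j+1}⋯d_k` for every
`1 ≤ j ≤ k`, or (2) `k ≥ 2` and `c_{k−1}·c_k ∣ d_k`. -/
theorem Ycd_eq_one (k : ℕ) (c d : List ℕ) (hck : c.length = k) (hdk : d.length = k)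
    (hc : ∀ x ∈ c, 0 < x) (hd : ∀ x ∈ d, 0 < x)
    (h : (∀ j, 1 ≤ j → j ≤ k → (c.drop (j - 1)).prod ∣ (d.drop (j - 1)).prod) ∨
      (2 ≤ k ∧ c.getD (k - 2) 1 * c.getD (k - 1) 1 ∣ d.getD (k - 1) 1)) :
    Ycd c d = 1 := by
  have hlen : d.length ≤ c.length := (hdk.trans hck.symm).le
  rcases h with h | ⟨hk, h⟩
  · have htail (j : ℕ) : (c.drop j).prod ∣ (d.drop j).prod := by
      rcases lt_or_ge j k with hj | hj
      · exact h (j + 1) j.succ_pos hj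
      · exact prod_drop_dvd_of_length_le (hck.trans_le hj) _
    have hstart : Yaux c d 0 * (c.drop 0).prod ∣ (d.drop 0).prod := by
      simpa only [Yaux, one_mul] using htail 0
    exact Ycd_eq_one_of_Yaux_mul_prod_drop_dvd hlen hd (Nat.zero_le _) hstart fun j _ => htail j
  · obtain ⟨n, rfl⟩ := Nat.exists_eq_add_of_le' hk
    have hstart : Yaux c d (n + 1) * (c.drop (n + 1)).prod ∣ (d.drop (n + 1)).prod := by
      rw [prod_drop_of_length_eq_succ hck, prod_drop_of_length_eq_succ hdk]
      exact (Nat.mul_dvd_mul_right (Yaux_succ_dvd_getD c d n) _).trans h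
    exact Ycd_eq_one_of_Yaux_mul_prod_drop_dvd hlen hd (by lia) hstart fun j hj =>
      prod_drop_dvd_of_length_le (hck.trans_le hj) _
end

section
/- Let c = (c_1, …, c_k) and d = (d_1, …, d_k) be divisor strings of the same length k ≥ 1 (that is, c_i ∣ c_{i+1} and d_i ∣ d_{i+1} for all 1 ≤ i ≤ k−1). If Y_{c,d} = 1, then c_k divides d_k. -/
theorem dvd_of_coprime_div {m n g : ℕ} (hgn : g ∣ n) (hmn : m ∣ n)
    (hcop : Nat.Coprime (n / g) m) : m ∣ g := by
  have hm : m ∣ n / g * g := by rwa [Nat.div_mul_cancel hgn]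
  exact hcop.symm.dvd_of_dvd_mul_left hm

theorem dvd_of_coprime_div_gcd {m n d : ℕ} (hmn : m ∣ n)
    (hcop : Nat.Coprime (n / Nat.gcd n d) m) : m ∣ d :=
  (dvd_of_coprime_div (Nat.gcd_dvd_left n d) hmn hcop).trans (Nat.gcd_dvd_right n d)

theorem last_dvd_of_Ycd_eq_one_general {cs ds : List ℕ} {j : ℕ} (hjc : j < cs.length)
    (hjd : j < ds.length) (hY : Yaux cs ds (j + 1) = 1) : cs[j] ∣ ds[j] := by
  rw [Yaux, List.getD_eq_getElem cs 1 hjc, List.getD_eq_getElem ds 1 hjd] at hY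
  exact dvd_of_coprime_div_gcd (Nat.dvd_mul_right cs[j] (Yaux cs ds j)) hY

/-- If `c` and `d` are divisor strings of the same length `k ≥ 1` and `Y_{c,d} = 1`,
then `c_k ∣ d_k`. -/
theorem last_dvd_of_Ycd_eq_one (k : ℕ) (hk : 1 ≤ k) (c d : List ℕ)
    (hck : c.length = k) (hdk : d.length = k)
    (hc : ∀ x ∈ c, 0 < x) (hd : ∀ x ∈ d, 0 < x)
    (hcchain : List.Chain' (· ∣ ·) c) (hdchain : List.Chain' (· ∣ ·) d)
    (hY : Ycd c d = 1) :
    c.getD (k - 1) 1 ∣ d.getD (k - 1) 1 := by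
  obtain ⟨j, rfl⟩ := Nat.exists_eq_add_of_le' hk
  rw [Ycd, hck] at hY
  simpa [hck, hdk] using last_dvd_of_Ycd_eq_one_general (by lia) (by lia) hY
end

section
/- Let c = (c_1, …, c_k) and d = (d_1, …, d_k) be divisor strings of the same length k ≥ 1 (that is, c_i ∣ c_{i+1} and d_i ∣ d_{i+1} for all 1 ≤ i ≤ k−1). If Y_{c,d} = 1 and Y_{d,c} = 1, then c_i = d_i for every i, i.e., the two divisor strings are equal. -/
/-!
Since `Y_{j-1}` divides `c_{j-1}`, hence `c_j`, the number `c_j Y_{j-1}` divides `c_j ^ 2`. If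
`Y_j = 1`, its quotient by `gcd(c_j Y_{j-1}, d_j)` is coprime to `c_j` and divides `c_j ^ 2`, so it
is `1`; that is, `c_j Y_{j-1} ∣ d_j`. With the roles of `c` and `d` exchanged, `c_j` and `d_j`
divide each other, so they are equal and both values of `Y_{j-1}` are `1`. Descend on `j`.
-/

theorem dvd_of_coprime_div_gcd_of_dvd_pow {a b d m : ℕ}
    (hcop : Nat.Coprime (a / Nat.gcd a d) b) (ha : a ∣ b ^ m) : a ∣ d := by
  have hdvd : a / Nat.gcd a d ∣ b ^ m := (Nat.div_dvd_of_dvd (Nat.gcd_dvd_left a d)).trans ha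
  have hone : a / Nat.gcd a d = 1 := (hcop.pow_right m).eq_one_of_dvd hdvd
  exact Nat.gcd_eq_left_iff_dvd.mp (Nat.eq_of_dvd_of_div_eq_one (Nat.gcd_dvd_left a d) hone)

theorem rel_getD_succ_of_isChain {α : Type*} {R : α → α → Prop} {l : List α}
    (hl : l.IsChain R) {n : ℕ} (hn : n + 1 < l.length) (a : α) :
    R (l.getD n a) (l.getD (n + 1) a) := by
  rw [List.getD_eq_getElem l a (Nat.lt_of_succ_lt hn), List.getD_eq_getElem l a hn]
  exact hl.getElem n hn

section Yaux

variable {c d : List ℕ} {n : ℕ}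

theorem getD_ne_zero_of_Yaux_succ_eq_one (hY : Yaux c d (n + 1) = 1) : c.getD n 1 ≠ 0 := by
  intro h
  rw [Yaux, h, zero_mul, Nat.zero_div, Nat.gcd_zero_left] at hY
  exact zero_ne_one hY

variable (d) in
theorem Yaux_dvd_getD (hc : c.IsChain (· ∣ ·)) (hn : n < c.length) :
    Yaux c d n ∣ c.getD n 1 := by
  cases n with
  | zero => exact one_dvd _
  | succ n => exact (Nat.gcd_dvd_right _ _).trans (rel_getD_succ_of_isChain hc hn 1)

theorem getD_mul_Yaux_dvd_getD (hc : c.IsChain (· ∣ ·)) (hn : n < c.length)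
    (hY : Yaux c d (n + 1) = 1) : c.getD n 1 * Yaux c d n ∣ d.getD n 1 := by
  have hsq : c.getD n 1 * Yaux c d n ∣ c.getD n 1 ^ 2 := by
    rw [sq]
    exact mul_dvd_mul_left _ (Yaux_dvd_getD d hc hn)
  exact dvd_of_coprime_div_gcd_of_dvd_pow hY hsq

theorem getD_eq_getD_of_Yaux_succ_eq_one (hc : c.IsChain (· ∣ ·)) (hd : d.IsChain (· ∣ ·))
    (hnc : n < c.length) (hnd : n < d.length)
    (hY : Yaux c d (n + 1) = 1) (hY' : Yaux d c (n + 1) = 1) : c.getD n 1 = d.getD n 1 :=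
  Nat.dvd_antisymm (dvd_of_mul_right_dvd (getD_mul_Yaux_dvd_getD hc hnc hY))
    (dvd_of_mul_right_dvd (getD_mul_Yaux_dvd_getD hd hnd hY'))

theorem Yaux_eq_one_of_Yaux_succ_eq_one (hc : c.IsChain (· ∣ ·)) (hn : n < c.length)
    (hcd : c.getD n 1 = d.getD n 1) (hY : Yaux c d (n + 1) = 1) : Yaux c d n = 1 := by
  have hdvd : c.getD n 1 * Yaux c d n ∣ c.getD n 1 * 1 := by
    rw [mul_one]
    exact (getD_mul_Yaux_dvd_getD hc hn hY).trans hcd.symm.dvd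
  exact Nat.dvd_one.mp (Nat.dvd_of_mul_dvd_mul_left
    (Nat.pos_of_ne_zero (getD_ne_zero_of_Yaux_succ_eq_one hY)) hdvd)

theorem getD_eq_getD_of_Yaux_eq_one (hc : c.IsChain (· ∣ ·)) (hd : d.IsChain (· ∣ ·))
    (hnc : n ≤ c.length) (hnd : n ≤ d.length) (hY : Yaux c d n = 1) (hY' : Yaux d c n = 1) :
    ∀ i < n, c.getD i 1 = d.getD i 1 := by
  induction n with
  | zero => exact fun i hi => absurd hi i.not_lt_zero
  | succ n ih =>
    have hlast : c.getD n 1 = d.getD n 1 :=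
      getD_eq_getD_of_Yaux_succ_eq_one hc hd hnc hnd hY hY'
    have hprev : ∀ i < n, c.getD i 1 = d.getD i 1 :=
      ih (Nat.le_of_succ_le hnc) (Nat.le_of_succ_le hnd)
        (Yaux_eq_one_of_Yaux_succ_eq_one hc hnc hlast hY)
        (Yaux_eq_one_of_Yaux_succ_eq_one hd hnd hlast.symm hY')
    exact Nat.forall_lt_succ_right.mpr ⟨hprev, hlast⟩

end Yaux

/-- If `c` and `d` are divisor strings of the same length `k ≥ 1` with
`Y_{c,d} = 1 = Y_{d,c}`, then `c = d`. -/
theorem eq_of_Ycd_eq_one (k : ℕ) (hk : 1 ≤ k) (c d : List ℕ)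
    (hck : c.length = k) (hdk : d.length = k)
    (hc : ∀ x ∈ c, 0 < x) (hd : ∀ x ∈ d, 0 < x)
    (hcchain : List.Chain' (· ∣ ·) c) (hdchain : List.Chain' (· ∣ ·) d)
    (hY : Ycd c d = 1) (hY' : Ycd d c = 1) :
    c = d := by
  have hlen : c.length = d.length := hck.trans hdk.symm
  have hYd : Yaux d c c.length = 1 := by rwa [Ycd, ← hlen] at hY'
  have hentries : ∀ i < c.length, c.getD i 1 = d.getD i 1 :=
    getD_eq_getD_of_Yaux_eq_one hcchain hdchain le_rfl hlen.le hY hYd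
  refine List.ext_getElem hlen fun i hic hid => ?_
  rw [← List.getD_eq_getElem c 1 hic, ← List.getD_eq_getElem d 1 hid]
  exact hentries i hic
end
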